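/- If the initial configuration places exactly 2^n − 1 chips at the root (n ≥ 1), then in every stabilizing sequence, for every 0 ≤ i < n each node on level n − i fires exactly 2^{i+1} − (i + 2) times (the Eulerian number ⟨i+1, 1⟩), and every node on level greater than n never fires. -/

import Mathlib

/-!
The odometer (the number of firings of each node) is identified by comparing it with the candidate
`target n v = 2 ^ j - j - 1`, where `j = n - ⌊log₂ v⌋`. Firing every node `v` exactly `target n v`
times would turn the initial configuration into the one with a single chip on each node of level
at most `n` (`initial_add_lap_target`).

Upper bound (`count_le_of_stabilizing`): by the least action principle, a legal sequence never
fires a node more often than a nonnegative function whose formal application yields a stable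
configuration, and `target n` is such a function.

Lower bound (`target_le_of_stable`): put `d = target n - u`, with `u` the odometer, and suppose
that the maximum `M` of `d` is positive. At a node where `M` is attained, stability of the final
configuration forces the values of `d` on the three neighbours to add up to at least `3 M - 1`, so
one of the two children attains `M` as well. Hence `M` is attained at arbitrarily deep nodes, which
is absurd as `target n` vanishes below level `n`.
-/

/-- The level of node `i` in the infinite binary tree: `⌊log₂ i⌋ + 1`. -/
def level (i : ℕ) : ℕ := Nat.log 2 i + 1

/-- The parent of node `i`; the root (node 1) is its own parent via the self-loop. -/
def parent (i : ℕ) : ℕ := if i = 1 then 1 else i / 2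

/-- Firing node `i`: it loses 3 chips and sends one chip to each of its left child `2i`,
its right child `2i+1`, and its parent (itself, when `i = 1`, via the self-loop). -/
def fire (i : ℕ) (c : ℕ → ℕ) : ℕ → ℕ := fun k =>
  (if k = i then c k - 3 else c k) + (if k = 2 * i then 1 else 0) +
    (if k = 2 * i + 1 then 1 else 0) + (if k = parent i then 1 else 0)

/-- Applying a sequence of firings. -/
def fireSeq : List ℕ → (ℕ → ℕ) → (ℕ → ℕ)
  | [], c => c
  | i :: l, c => fireSeq l (fire i c)

/-- A sequence of firings is legal if each fired node is a positive integer
holding at least 3 chips at the moment it fires. -/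
def LegalSeq : List ℕ → (ℕ → ℕ) → Prop
  | [], _ => True
  | i :: l, c => 1 ≤ i ∧ 3 ≤ c i ∧ LegalSeq l (fire i c)

/-- A configuration is stable if every node holds at most 2 chips. -/
def Stable (c : ℕ → ℕ) : Prop := ∀ i, 1 ≤ i → c i ≤ 2

/-- The initial configuration with `N` chips at the root. -/
def initial (N : ℕ) : ℕ → ℕ := fun k => if k = 1 then N else 0

/-- The net number of chips gained by node `v` when each node `w` fires `g w` times. As
`parent 1 = 1`, the same formula accounts for the self-loop at the root. -/
def lap (g : ℕ → ℤ) (v : ℕ) : ℤ :=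
  g (parent v) + g (2 * v) + g (2 * v + 1) - 3 * g v

/-- The claimed number of firings of node `v`. With the truncated subtraction, nodes of level
greater than `n` get `2 ^ 0 - 0 - 1 = 0`. -/
def target (n v : ℕ) : ℤ := 2 ^ (n - Nat.log 2 v) - ((n - Nat.log 2 v : ℕ) : ℤ) - 1

lemma fire_eq_add_lap {i : ℕ} (hi : 1 ≤ i) {c : ℕ → ℕ} (hc : 3 ≤ c i) {v : ℕ} (hv : 1 ≤ v) :
    (fire i c v : ℤ) = c v + lap (fun w => if w = i then 1 else 0) v := by
  unfold fire lap parent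
  beta_reduce
  by_cases hvi : v = i
  · subst hvi
    split_ifs <;> omega
  · split_ifs <;> omega

lemma lap_add (f g : ℕ → ℤ) (v : ℕ) : lap (fun w => f w + g w) v = lap f v + lap g v := by
  unfold lap
  ring

lemma count_cons_cast (i : ℕ) (l : List ℕ) (w : ℕ) :
    (((i :: l).count w : ℕ) : ℤ) = (if w = i then 1 else 0) + l.count w := by
  rw [List.count_cons]
  by_cases h : w = i
  · simp [h, add_comm]
  · simp [h, Ne.symm h]

lemma fireSeq_eq_add_lap (l : List ℕ) : ∀ c : ℕ → ℕ, LegalSeq l c → ∀ v, 1 ≤ v →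
    (fireSeq l c v : ℤ) = c v + lap (fun w => (l.count w : ℤ)) v := by
  induction l with
  | nil => intro c _ v _; simp [fireSeq, lap]
  | cons i l ih =>
    rintro c ⟨hi, hc, hl⟩ v hv
    have h := ih _ hl v hv
    rw [fire_eq_add_lap hi hc hv] at h
    simp only [fireSeq, count_cons_cast, lap_add]
    linarith

/-- Least action principle: a legal sequence fires each node at most as often as any nonnegative
`g` whose formal application leaves at most two chips on every node. -/
lemma count_le_of_stabilizing (l : List ℕ) : ∀ (c : ℕ → ℕ) (g : ℕ → ℤ), LegalSeq l c →
    (∀ v, 0 ≤ g v) → (∀ v, 1 ≤ v → c v + lap g v ≤ 2) → ∀ v, (l.count v : ℤ) ≤ g v := by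
  induction l with
  | nil => intro c g _ hg _ v; simpa using hg v
  | cons i l ih =>
    rintro c g ⟨hi, hc, hl⟩ hg hs v
    -- A node holding three chips has to fire in order to become stable.
    have hpos : 1 ≤ g i := by
      have h := hs i hi
      have h1 := hg (2 * i)
      have h2 := hg (2 * i + 1)
      have h3 := hg (parent i)
      have h4 := hg i
      unfold lap at h
      omega
    have hsub : ∀ w, g w = (if w = i then 1 else 0) + (g w - if w = i then 1 else 0) := by
      intro w; ring
    have h := ih (fire i c) (fun w => g w - if w = i then 1 else 0) hl
      (by
        intro w
        have := hg w
        split_ifs with hw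
        · subst hw; omega
        · omega)
      (by
        intro w hw
        have h := hs w hw
        rw [funext hsub, lap_add] at h
        rw [fire_eq_add_lap hi hc hw]
        linarith) v
    rw [count_cons_cast]
    linarith

lemma target_nonneg (n v : ℕ) : 0 ≤ target n v := by
  unfold target
  have h : n - Nat.log 2 v < 2 ^ (n - Nat.log 2 v) := Nat.lt_two_pow_self
  zify at h
  linarith

lemma log_two_mul {v : ℕ} (hv : 1 ≤ v) : Nat.log 2 (2 * v) = Nat.log 2 v + 1 := by
  rw [mul_comm, Nat.log_mul_base (by norm_num) (by omega)]

lemma log_two_mul_add_one {v : ℕ} (hv : 1 ≤ v) : Nat.log 2 (2 * v + 1) = Nat.log 2 v + 1 := by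
  rw [Nat.log_of_one_lt_of_le (by norm_num) (by omega)]
  congr 2
  omega

lemma initial_add_lap_target {n : ℕ} (hn : 1 ≤ n) {v : ℕ} (hv : 1 ≤ v) :
    (initial (2 ^ n - 1) v : ℤ) + lap (target n) v = if Nat.log 2 v < n then 1 else 0 := by
  unfold lap target
  rw [log_two_mul hv, log_two_mul_add_one hv]
  rcases eq_or_lt_of_le hv with rfl | hv2
  · obtain ⟨m, rfl⟩ := Nat.exists_eq_add_of_le' hn
    have hc : ((2 ^ (m + 1) - 1 : ℕ) : ℤ) = 2 ^ (m + 1) - 1 := by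
      rw [Nat.cast_sub Nat.one_le_two_pow]
      push_cast
      ring
    simp only [initial, parent, if_true, Nat.log_one_right, hc]
    simp
    ring
  · have hp : parent v = v / 2 := by unfold parent; rw [if_neg (by omega)]
    have hlog : Nat.log 2 v = Nat.log 2 (v / 2) + 1 :=
      Nat.log_of_one_lt_of_le (by norm_num) hv2
    have hi : initial (2 ^ n - 1) v = 0 := by unfold initial; rw [if_neg (by omega)]
    rw [hp, hi, hlog]
    generalize Nat.log 2 (v / 2) = k
    split_ifs with h
    · obtain ⟨m, rfl⟩ := Nat.exists_eq_add_of_lt h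
      rw [show k + 1 + m + 1 - k = m + 2 by omega, show k + 1 + m + 1 - (k + 1) = m + 1 by omega,
        show k + 1 + m + 1 - (k + 1 + 1) = m by omega]
      push_cast
      ring
    · rw [show n - (k + 1) = 0 by omega, show n - (k + 1 + 1) = 0 by omega]
      rcases (show n - k = 0 ∨ n - k = 1 by omega) with h0 | h0 <;> rw [h0] <;> norm_num

/-- Any nonnegative odometer that stabilizes the initial configuration dominates `target n`. -/
lemma target_le_of_stable {n : ℕ} (hn : 1 ≤ n) (u : ℕ → ℤ) (hu : ∀ v, 0 ≤ u v)
    (hs : ∀ v, 1 ≤ v → (initial (2 ^ n - 1) v : ℤ) + lap u v ≤ 2) :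
    ∀ v, 1 ≤ v → target n v ≤ u v := by
  by_contra! hcon
  obtain ⟨a, ha, hda⟩ := hcon
  set d : ℕ → ℤ := fun v => target n v - u v with hd
  have hlev : ∀ v, 0 < d v → Nat.log 2 v < n := by
    intro v hv
    by_contra! h
    have : target n v = 0 := by
      unfold target
      rw [Nat.sub_eq_zero_of_le h]
      norm_num
    have := hu v
    simp only [hd] at hv
    omega
  have hmem : ∀ v, 1 ≤ v → 0 < d v → v ∈ Finset.Ico 1 (2 ^ n) := fun v h1 hv =>
    Finset.mem_Ico.2 ⟨h1, Nat.lt_pow_of_log_lt (by norm_num) (hlev v hv)⟩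
  have hda' : 0 < d a := by simp only [hd]; omega
  obtain ⟨b, hb, hbmax⟩ := Finset.exists_max_image _ d ⟨a, hmem a ha hda'⟩
  have hMpos : 0 < d b := hda'.trans_le (hbmax a (hmem a ha hda'))
  have hmax : ∀ v, 1 ≤ v → d v ≤ d b := by
    intro v hv
    by_cases h : 0 < d v
    · exact hbmax v (hmem v hv h)
    · omega
  -- The largest label `e` at which the maximum of `d` is attained.
  obtain ⟨e, he, hemax⟩ := Finset.exists_max_image
    ((Finset.Ico 1 (2 ^ n)).filter fun v => d v = d b) id ⟨b, Finset.mem_filter.2 ⟨hb, rfl⟩⟩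
  obtain ⟨he, hde⟩ := Finset.mem_filter.1 he
  have he1 := (Finset.mem_Ico.1 he).1
  have hchild : ∀ w, e < w → d w < d b := by
    intro w hw
    refine lt_of_le_of_ne (hmax w (by omega)) fun heq => ?_
    have := hemax w (Finset.mem_filter.2 ⟨hmem w (by omega) (heq ▸ hMpos), heq⟩)
    simp only [id] at this
    omega
  have h1 := hchild (2 * e) (by omega)
  have h2 := hchild (2 * e + 1) (by omega)
  have h3 := hmax (parent e) (by unfold parent; split_ifs <;> omega)
  have h4 := hs e he1
  have h5 := initial_add_lap_target hn he1
  rw [if_pos (hlev e (hde ▸ hMpos))] at h5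
  unfold lap at h4 h5
  simp only [hd] at h1 h2 h3 hde
  omega

/-- If `2^n − 1` chips start at the root, then in every stabilizing sequence, for `0 ≤ i < n`
each node on level `n − i` fires exactly `2^{i+1} − (i + 2)` times (the Eulerian number
`⟨i+1, 1⟩`), and every node on level greater than `n` never fires. -/
theorem stmt4 (n : ℕ) (hn : 1 ≤ n) (l : List ℕ)
    (hleg : LegalSeq l (initial (2 ^ n - 1)))
    (hst : Stable (fireSeq l (initial (2 ^ n - 1)))) :
    (∀ i, i < n → ∀ v, 1 ≤ v → level v = n - i →
      l.count v = 2 ^ (i + 1) - (i + 2)) ∧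
    (∀ v, 1 ≤ v → n < level v → l.count v = 0) := by
  have key : ∀ v, 1 ≤ v → (l.count v : ℤ) = target n v := by
    intro v hv
    refine le_antisymm ?_ ?_
    · refine count_le_of_stabilizing l _ _ hleg (target_nonneg n) (fun w hw => ?_) v
      rw [initial_add_lap_target hn hw]
      split_ifs <;> norm_num
    · refine target_le_of_stable hn (fun w => (l.count w : ℤ)) (fun w => by positivity)
        (fun w hw => ?_) v hv
      rw [← fireSeq_eq_add_lap l _ hleg w hw]
      exact_mod_cast hst w hw
  refine ⟨fun i hi v hv hl => ?_, fun v hv hl => ?_⟩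
  · have h := key v hv
    unfold target at h
    unfold level at hl
    rw [show n - Nat.log 2 v = i + 1 by omega] at h
    have h2 : ((2 ^ (i + 1) : ℕ) : ℤ) = 2 ^ (i + 1) := by push_cast; rfl
    rw [← h2] at h
    omega
  · have h := key v hv
    unfold target at h
    unfold level at hl
    rw [show n - Nat.log 2 v = 0 by omega] at h
    norm_num at h
    exact h
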